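/- arXiv:1607.08720 — 2 statements merged into one kernel-verified Lean document; each statement's English description precedes it below -/
import Mathlib

section
/- Let W be an m × k real matrix with nonnegative entries, H a k × n real matrix with nonnegative entries, 𝟙 the 1 × k all-ones row vector, c1, c2, c3 ≥ 0, θ ∈ ℝⁿ, β ∈ ℝᵏ, and fix indices i ∈ {1,…,k}, j ∈ {1,…,n}; write h = H_{ij}. Then (WᵀWH)_{ij} + c1(𝟙ᵀ𝟙H)_{ij} + 6 c2 h³ + c2 h + (1/2) c3 max(0, −(θ_j − β_i)) ≥ h · [ (WᵀW)_{ii} + c1(𝟙ᵀ𝟙)_{ii} + 6 c2 h² − 6 c2 h + c2 ]. -/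
open Matrix

/-!
The nonnegative off-diagonal terms in row `i` of `WᵀW` and of `𝟙ᵀ𝟙` only increase `(WᵀWH)ᵢⱼ` and
`(𝟙ᵀ𝟙H)ᵢⱼ`, so dropping them leaves `(WᵀW)ᵢᵢ h` and `(𝟙ᵀ𝟙)ᵢᵢ h`. The `c2` terms of the right-hand
bracket are half the second derivative of the penalty `c2 (h² - h)²`; there the gap between the
two sides is `6 c2 h²`.
-/

theorem mul_le_matrix_mul_apply {ι κ ν R : Type*} [Fintype κ] [NonUnitalNonAssocSemiring R]
    [PartialOrder R] [IsOrderedAddMonoid R] {A : Matrix ι κ R} {B : Matrix κ ν R}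
    {i : ι} {l : κ} {j : ν} (hAB : ∀ l' ≠ l, 0 ≤ A i l' * B l' j) :
    A i l * B l j ≤ (A * B) i j := by
  classical
  rw [mul_apply, ← Finset.add_sum_erase _ _ (Finset.mem_univ l)]
  exact le_add_of_nonneg_right
    (Finset.sum_nonneg fun l' hl' => hAB l' (Finset.ne_of_mem_erase hl'))

theorem topicresponse_phi_inequality_general {ι κ ν K : Type*} [Fintype ι] [Fintype κ]
    [Field K] [LinearOrder K] [IsStrictOrderedRing K]
    (W : Matrix ι κ K) (H : Matrix κ ν K) {c1 c2 c3 : K}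
    (hc1 : 0 ≤ c1) (hc2 : 0 ≤ c2) (hc3 : 0 ≤ c3) (θ : ν → K) (β : κ → K) (i : κ) (j : ν)
    (hW : ∀ l ≠ i, 0 ≤ (Wᵀ * W) i l) (hH : ∀ l ≠ i, 0 ≤ H l j) :
    let ones : Matrix (Fin 1) κ K := Matrix.of fun _ _ => 1
    let h : K := H i j
    (Wᵀ * W * H) i j + c1 * (onesᵀ * ones * H) i j + 6 * c2 * h ^ 3 + c2 * h
        + (1 / 2) * c3 * max 0 (-(θ j - β i))
      ≥ h * ((Wᵀ * W) i i + c1 * (onesᵀ * ones) i i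
        + 6 * c2 * h ^ 2 - 6 * c2 * h + c2) := by
  intro ones h
  have gram_le : (Wᵀ * W) i i * h ≤ (Wᵀ * W * H) i j :=
    mul_le_matrix_mul_apply fun l hl => mul_nonneg (hW l hl) (hH l hl)
  have ones_gram_nonneg (l : κ) : 0 ≤ (onesᵀ * ones) i l :=
    dotProduct_nonneg_of_nonneg (fun _ => zero_le_one) (fun _ => zero_le_one)
  have ones_gram_le : c1 * ((onesᵀ * ones) i i * h) ≤ c1 * (onesᵀ * ones * H) i j :=
    mul_le_mul_of_nonneg_left
      (mul_le_matrix_mul_apply fun l hl => mul_nonneg (ones_gram_nonneg l) (hH l hl)) hc1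
  have penalty_le : h * (6 * c2 * h ^ 2 - 6 * c2 * h + c2) ≤ 6 * c2 * h ^ 3 + c2 * h := by
    have gap_nonneg : 0 ≤ 6 * c2 * h ^ 2 := by positivity
    linear_combination gap_nonneg
  have response_nonneg : 0 ≤ (1 / 2) * c3 * max 0 (-(θ j - β i)) := by positivity
  linear_combination gram_le + ones_gram_le + penalty_le + response_nonneg

/-- Key inequality `φ_{ij} h ≥ (1/2) F''(h) · h` in the auxiliary-function proof
for the `H`-update of TopicResponse. -/
theorem topicresponse_phi_inequality
    (m k n : ℕ)
    (W : Matrix (Fin m) (Fin k) ℝ) (H : Matrix (Fin k) (Fin n) ℝ)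
    (hW : ∀ a b, 0 ≤ W a b) (hH : ∀ a b, 0 ≤ H a b)
    (c1 c2 c3 : ℝ) (hc1 : 0 ≤ c1) (hc2 : 0 ≤ c2) (hc3 : 0 ≤ c3)
    (θ : Fin n → ℝ) (β : Fin k → ℝ) (i : Fin k) (j : Fin n) :
    let ones : Matrix (Fin 1) (Fin k) ℝ := Matrix.of fun _ _ => 1
    let h : ℝ := H i j
    (Wᵀ * W * H) i j + c1 * (onesᵀ * ones * H) i j + 6 * c2 * h ^ 3 + c2 * h
        + (1 / 2) * c3 * max 0 (-(θ j - β i))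
      ≥ h * ((Wᵀ * W) i i + c1 * (onesᵀ * ones) i i
        + 6 * c2 * h ^ 2 - 6 * c2 * h + c2) :=
  topicresponse_phi_inequality_general W H hc1 hc2 hc3 θ β i j
    (fun l _ => dotProduct_nonneg_of_nonneg (fun a => hW a i) (fun a => hW a l))
    (fun l _ => hH l j)
end

section
/- Let V ∈ ℝ^{m×n} and H ∈ ℝ^{k×n} have nonnegative entries, let λ ≥ 0, and let W ∈ ℝ^{m×k} have nonnegative entries such that (WHHᵀ + λW)_{ab} > 0 for all (a,b). Define the multiplicative update W'_{ab} = W_{ab} · (VHᵀ)_{ab} / (WHHᵀ + λW)_{ab}. Then the regularised NMF objective is non-increasing: ‖V − W'H‖ + λ‖W'‖ ≤ ‖V − WH‖ + λ‖W‖. -/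
open Matrix

/-- Squared Frobenius norm. -/
noncomputable def sqFrob {a b : ℕ} (A : Matrix (Fin a) (Fin b) ℝ) : ℝ :=
  ∑ i, ∑ j, (A i j) ^ 2

/-!
Each row `w` of `W` contributes `w ⬝ᵥ A *ᵥ w - 2 * (b ⬝ᵥ w)` plus a constant to the objective,
where `A = H * Hᵀ + λ • 1` and `b` is the matching row of `V * Hᵀ`, and the update multiplies `w`
entrywise by `r = b / (A *ᵥ w)`. For `w ≥ 0` and symmetric `A` with nonnegative off-diagonal
entries, `(w * r) ⬝ᵥ A *ᵥ (w * r) ≤ ∑ i, w i * r i ^ 2 * (A *ᵥ w) i`. This is Lee and Seung's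
diagonal majorisation, and it makes the update decrease the row objective by at least
`∑ i, w i * (A *ᵥ w) i * (r i - 1) ^ 2`.
-/

section QuadraticObjective

variable {ι κ R : Type*} [Fintype ι] [Fintype κ] [CommRing R]

/-- The quadratic function `x ↦ xᵀAx - 2bᵀx`. It is normalised without the factor `1/2`, so that its
stationary points are the solutions of `A *ᵥ x = b` when `A` is symmetric. -/
def quadraticObjective (A : Matrix ι ι R) (b x : ι → R) : R :=
  x ⬝ᵥ A *ᵥ x - 2 * (b ⬝ᵥ x)

theorem sq_residual_add_ridge_eq_quadraticObjective [DecidableEq κ] (H : Matrix κ ι R)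
    (v : ι → R) (w : κ → R) (lam : R) :
    (v - w ᵥ* H) ⬝ᵥ (v - w ᵥ* H) + lam * (w ⬝ᵥ w) =
      v ⬝ᵥ v + quadraticObjective (H * Hᵀ + lam • 1) (H *ᵥ v) w := by
  have hgram : w ⬝ᵥ (H * Hᵀ) *ᵥ w = (w ᵥ* H) ⬝ᵥ (w ᵥ* H) := by
    rw [← mulVec_mulVec, mulVec_transpose, dotProduct_mulVec]
  have hcross : H *ᵥ v ⬝ᵥ w = v ⬝ᵥ (w ᵥ* H) := by
    rw [dotProduct_comm, dotProduct_mulVec, dotProduct_comm]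
  rw [quadraticObjective, add_mulVec, smul_mulVec, one_mulVec, dotProduct_add, dotProduct_smul,
    smul_eq_mul, hgram, hcross, sub_dotProduct, dotProduct_sub, dotProduct_sub,
    dotProduct_comm (w ᵥ* H) v]
  ring

theorem two_mul_diagonal_sub_quadratic_form {A : Matrix ι ι R} (hA : A.IsSymm) (w r : ι → R) :
    2 * ((w * r ^ 2) ⬝ᵥ A *ᵥ w - (w * r) ⬝ᵥ A *ᵥ (w * r)) =
      ∑ i, ∑ j, A i j * (w i * w j) * (r i - r j) ^ 2 := by
  have hswap : ∑ i, ∑ j, A i j * (w i * w j) * r j ^ 2 =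
      ∑ i, ∑ j, A i j * (w i * w j) * r i ^ 2 := by
    rw [Finset.sum_comm]
    simp only [hA.apply, mul_comm (w _) (w _)]
  have hdiag : (w * r ^ 2) ⬝ᵥ A *ᵥ w = ∑ i, ∑ j, A i j * (w i * w j) * r i ^ 2 := by
    simp only [dotProduct, mulVec, Finset.mul_sum, Pi.mul_apply, Pi.pow_apply]
    congr! 2
    ring
  have hform : (w * r) ⬝ᵥ A *ᵥ (w * r) = ∑ i, ∑ j, A i j * (w i * w j) * (r i * r j) := by
    simp only [dotProduct, mulVec, Finset.mul_sum, Pi.mul_apply]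
    congr! 2
    ring
  calc 2 * ((w * r ^ 2) ⬝ᵥ A *ᵥ w - (w * r) ⬝ᵥ A *ᵥ (w * r))
      = ∑ i, ∑ j, A i j * (w i * w j) * r i ^ 2 + ∑ i, ∑ j, A i j * (w i * w j) * r j ^ 2
          - 2 * ∑ i, ∑ j, A i j * (w i * w j) * (r i * r j) := by
        rw [hswap, hdiag, hform]
        ring
    _ = ∑ i, ∑ j, A i j * (w i * w j) * (r i - r j) ^ 2 := by
        simp only [Finset.mul_sum, ← Finset.sum_add_distrib, ← Finset.sum_sub_distrib]
        congr! 2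
        ring

variable [LinearOrder R] [IsStrictOrderedRing R]

theorem quadratic_form_le_diagonal {A : Matrix ι ι R} (hA : A.IsSymm)
    (hA_off : Pairwise fun i j => 0 ≤ A i j) {w : ι → R} (hw : 0 ≤ w) (r : ι → R) :
    (w * r) ⬝ᵥ A *ᵥ (w * r) ≤ (w * r ^ 2) ⬝ᵥ A *ᵥ w := by
  have hnonneg : 0 ≤ ∑ i, ∑ j, A i j * (w i * w j) * (r i - r j) ^ 2 := by
    refine Finset.sum_nonneg fun i _ => Finset.sum_nonneg fun j _ => ?_
    obtain rfl | hij := eq_or_ne i j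
    · simp
    · exact mul_nonneg (mul_nonneg (hA_off hij) (mul_nonneg (hw i) (hw j))) (sq_nonneg _)
  rw [← two_mul_diagonal_sub_quadratic_form hA] at hnonneg
  linarith

theorem quadraticObjective_mul_le {A : Matrix ι ι R} (hA : A.IsSymm)
    (hA_off : Pairwise fun i j => 0 ≤ A i j) {w : ι → R} (hw : 0 ≤ w) (hAw : 0 ≤ A *ᵥ w)
    (r : ι → R) :
    quadraticObjective A (A *ᵥ w * r) (w * r) ≤ quadraticObjective A (A *ᵥ w * r) w := by
  have hdecrease : 0 ≤ ∑ i, w i * (A *ᵥ w) i * (r i - 1) ^ 2 :=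
    Finset.sum_nonneg fun i _ => mul_nonneg (mul_nonneg (hw i) (hAw i)) (sq_nonneg _)
  have hcomplete : (w * r ^ 2) ⬝ᵥ A *ᵥ w - 2 * ((A *ᵥ w * r) ⬝ᵥ (w * r)) =
      w ⬝ᵥ A *ᵥ w - 2 * ((A *ᵥ w * r) ⬝ᵥ w) - ∑ i, w i * (A *ᵥ w) i * (r i - 1) ^ 2 := by
    simp only [dotProduct, Finset.mul_sum, ← Finset.sum_sub_distrib, Pi.mul_apply, Pi.pow_apply]
    congr! 1
    ring
  unfold quadraticObjective
  linarith [quadratic_form_le_diagonal hA hA_off hw r]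

theorem quadraticObjective_mul_div_mulVec_le {F : Type*} [Field F] [LinearOrder F]
    [IsStrictOrderedRing F] {A : Matrix ι ι F} (hA : A.IsSymm)
    (hA_off : Pairwise fun i j => 0 ≤ A i j) {w : ι → F} (hw : 0 ≤ w)
    (hAw : ∀ i, 0 < (A *ᵥ w) i) (b : ι → F) :
    quadraticObjective A b (w * b / A *ᵥ w) ≤ quadraticObjective A b w := by
  have hb : A *ᵥ w * (b / A *ᵥ w) = b := funext fun i => mul_div_cancel₀ _ (hAw i).ne'
  have hle := quadraticObjective_mul_le hA hA_off hw (fun i => (hAw i).le) (b / A *ᵥ w)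
  rwa [hb, ← mul_div_assoc] at hle

end QuadraticObjective

section NMF

variable {m n k R : Type*} [Fintype m] [Fintype n] [Fintype k]

/-- The ridge-regularised factorisation objective `‖V - WH‖ + λ‖W‖` in squared Frobenius norms, as a
function of `W`. -/
def nmfObjective [CommRing R] (V : Matrix m n R) (H : Matrix k n R) (lam : R)
    (W : Matrix m k R) : R :=
  ∑ i, ∑ j, (V - W * H) i j ^ 2 + lam * ∑ i, ∑ j, W i j ^ 2

theorem nmfObjective_eq_sum_quadraticObjective [CommRing R] [DecidableEq k] (V : Matrix m n R)
    (H : Matrix k n R) (lam : R) (W : Matrix m k R) :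
    nmfObjective V H lam W =
      ∑ i, (V i ⬝ᵥ V i + quadraticObjective (H * Hᵀ + lam • 1) (H *ᵥ V i) (W i)) := by
  have hrow (i : m) : V i - W i ᵥ* H = (V - W * H) i := rfl
  simp only [← sq_residual_add_ridge_eq_quadraticObjective, hrow]
  simp only [nmfObjective, Finset.sum_add_distrib, Finset.mul_sum, dotProduct, ← sq]

theorem nmf_W_update_nonincreasing_general [Field R] [LinearOrder R] [IsStrictOrderedRing R]
    (V : Matrix m n R) (H : Matrix k n R) (W : Matrix m k R) (lam : R)
    (hH : Pairwise fun a b => 0 ≤ (H * Hᵀ) a b) (hW : ∀ i j, 0 ≤ W i j)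
    (hden : ∀ a b, 0 < (W * H * Hᵀ + lam • W) a b) :
    nmfObjective V H lam
        (of fun a b => W a b * (V * Hᵀ) a b / (W * H * Hᵀ + lam • W) a b) ≤
      nmfObjective V H lam W := by
  classical
  set A : Matrix k k R := H * Hᵀ + lam • 1 with hA_def
  have hgram : (H * Hᵀ).IsSymm := transpose_mul H Hᵀ
  have hA : A.IsSymm := hgram.add (isSymm_one.smul lam)
  have hA_off : Pairwise fun a b => 0 ≤ A a b := fun a b hab => by
    simpa [hA_def, hab] using hH hab
  have hden_eq : W * H * Hᵀ + lam • W = W * A := by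
    rw [hA_def, Matrix.mul_add, Matrix.mul_assoc, Matrix.mul_smul, Matrix.mul_one]
  have hden_row (i : m) : (W * H * Hᵀ + lam • W) i = A *ᵥ W i := by
    rw [hden_eq, mul_apply_eq_vecMul, ← mulVec_transpose, hA.eq]
  have hnum_row (i : m) : (V * Hᵀ) i = H *ᵥ V i := by
    rw [mul_apply_eq_vecMul, vecMul_transpose]
  rw [nmfObjective_eq_sum_quadraticObjective, nmfObjective_eq_sum_quadraticObjective, ← hA_def]
  gcongr with i
  have hupdate : of (fun a b => W a b * (V * Hᵀ) a b / (W * H * Hᵀ + lam • W) a b) i =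
      W i * (H *ᵥ V i) / A *ᵥ W i := by
    rw [← hnum_row, ← hden_row]
    rfl
  rw [hupdate]
  exact quadraticObjective_mul_div_mulVec_le hA hA_off (hW i) (fun b => hden_row i ▸ hden i b) _

end NMF

/-- The multiplicative update `W'_{ab} = W_{ab}·(VHᵀ)_{ab}/(WHHᵀ + λW)_{ab}` does not
increase the regularised NMF objective `‖V − WH‖ + λ‖W‖` (squared Frobenius norms). -/
theorem nmf_W_update_nonincreasing
    (m n k : ℕ) (V : Matrix (Fin m) (Fin n) ℝ) (H : Matrix (Fin k) (Fin n) ℝ)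
    (W : Matrix (Fin m) (Fin k) ℝ) (lam : ℝ)
    (hV : ∀ i j, 0 ≤ V i j) (hH : ∀ i j, 0 ≤ H i j) (hW : ∀ i j, 0 ≤ W i j)
    (hlam : 0 ≤ lam)
    (hden : ∀ a b, 0 < (W * H * Hᵀ + lam • W) a b) :
    let W' : Matrix (Fin m) (Fin k) ℝ :=
      Matrix.of fun a b => W a b * (V * Hᵀ) a b / (W * H * Hᵀ + lam • W) a b
    sqFrob (V - W' * H) + lam * sqFrob W'
      ≤ sqFrob (V - W * H) + lam * sqFrob W := by
  have hgram : Pairwise fun a b => 0 ≤ (H * Hᵀ) a b := fun a b _ => by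
    simp only [mul_apply, transpose_apply]
    exact Finset.sum_nonneg fun j _ => mul_nonneg (hH a j) (hH b j)
  exact nmf_W_update_nonincreasing_general V H W lam hgram hW hden
end
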